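/- For every k = 0,…,d, the diagonal entries of Λ satisfy Λ(k,k) = (P(0,1)·P(1,2)⋯P(k−1,k)) / ((1−θ_0)(1−θ_1)⋯(1−θ_{k−1})) ≠ 0. In particular the lower triangular matrix Λ is invertible, and hence P and P̂ are similar matrices. -/

import Mathlib

open Matrix Polynomial

/-!
Write `A` for `P` over `ℂ` and `p_k` for row `k` of `Λ`, i.e. row `0` of `Q_k`. By construction
`(1 - θ_k) p_{k+1} = p_k A - θ_k p_k`. As `A` is upward skip-free, induction on `k` shows that `p_k`
is supported on `{0, …, k}` and that `p_{k+1}(k+1) = p_k(k) A(k, k+1) / (1 - θ_k)`, which is the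
product formula for the diagonal (`row_triangular`, `row_diag`).

What needs the probabilistic hypotheses is `θ_k ≠ 1` for `k < d` (`theta_ne_one`): expanding along
the absorbing row, `∏ (X - θ_j)` is the characteristic polynomial of the leading `d × d` block of
`P`, and `1` is not an eigenvalue of that block by the maximum principle: a vector fixed by `P`
attains its maximum at `d`, since `v_i = max v` forces `v_{i+1} = max v`.

Finally `P̂ Λ = Λ A`: rows `k < d` are the recursion above, and row `d` is the identity
`Q_d (A - 1) = 0`, which is the Cayley–Hamilton theorem (`Q_last_mul`). Since `Λ` is lower
triangular with nonzero diagonal it is invertible, and `P̂ = Λ A Λ⁻¹`.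
-/

/-- Maximum principle: a real vector fixed by the chain is bounded above by its value at the
absorbing state. -/
lemma le_last_of_fixed {d : ℕ} (P : Matrix (Fin (d + 1)) (Fin (d + 1)) ℝ)
    (hnonneg : ∀ i j, 0 ≤ P i j) (hrowsum : ∀ i, ∑ j, P i j = 1)
    (hsuper : ∀ i j : Fin (d + 1), (j : ℕ) = (i : ℕ) + 1 → 0 < P i j)
    (v : Fin (d + 1) → ℝ) (hv : ∀ i : Fin d, ∑ j, P i.castSucc j * v j = v i.castSucc)
    (i : Fin (d + 1)) : v i ≤ v (Fin.last d) := by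
  obtain ⟨m, hm⟩ := Finite.exists_max v
  -- The set of maximizers is closed under `i ↦ i + 1`.
  have step : ∀ k : Fin d, v k.castSucc = v m → v k.succ = v m := by
    intro k hk
    have hsum : ∑ j, P k.castSucc j * (v m - v j) = 0 := by
      simp only [mul_sub, Finset.sum_sub_distrib, ← Finset.sum_mul, hrowsum, hv, hk]
      ring
    have hz := (Finset.sum_eq_zero_iff_of_nonneg (fun j _ =>
      mul_nonneg (hnonneg _ j) (sub_nonneg.2 (hm j)))).1 hsum k.succ (Finset.mem_univ _)
    have hpos := hsuper k.castSucc k.succ (by simp)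
    rcases mul_eq_zero.1 hz with h | h
    · exact absurd h hpos.ne'
    · linarith
  have key : ∀ k : Fin (d + 1), m ≤ k → v k = v m := by
    intro k
    induction k using Fin.induction with
    | zero =>
      intro h
      rw [Fin.le_zero_iff.1 h]
    | succ k ih =>
      intro h
      rcases h.eq_or_lt with h | h
      · rw [h]
      · exact step k (ih (Fin.le_castSucc_iff.2 h))
  rw [key _ (Fin.le_last m)]
  exact hm i

/-- The leading `d × d` block of the chain does not have eigenvalue `1`. -/
lemma det_block_ne_zero {d : ℕ} (P : Matrix (Fin (d + 1)) (Fin (d + 1)) ℝ)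
    (hnonneg : ∀ i j, 0 ≤ P i j) (hrowsum : ∀ i, ∑ j, P i j = 1)
    (hsuper : ∀ i j : Fin (d + 1), (j : ℕ) = (i : ℕ) + 1 → 0 < P i j) :
    (1 - P.submatrix Fin.castSucc Fin.castSucc : Matrix (Fin d) (Fin d) ℝ).det ≠ 0 := by
  intro hdet
  obtain ⟨v, hv0, hv⟩ := Matrix.exists_mulVec_eq_zero_iff.2 hdet
  have hfix : ∀ i : Fin d, ∑ j : Fin d, P i.castSucc j.castSucc * v j = v i := by
    intro i
    have h := congrFun hv i
    rw [Matrix.sub_mulVec, Matrix.one_mulVec] at h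
    simp only [Pi.sub_apply, Pi.zero_apply, Matrix.mulVec, dotProduct,
      Matrix.submatrix_apply] at h
    linarith
  -- Extend `±v` by `0` at the absorbing state.
  have h1 := le_last_of_fixed P hnonneg hrowsum hsuper (Fin.snoc v 0)
    (by intro i; simp [Fin.sum_univ_castSucc, hfix])
  have h2 := le_last_of_fixed P hnonneg hrowsum hsuper (Fin.snoc (-v) 0)
    (by intro i; simp [Fin.sum_univ_castSucc, hfix])
  apply hv0
  funext i
  have a := h1 i.castSucc
  have b := h2 i.castSucc
  simp only [Fin.snoc_castSucc, Fin.snoc_last, Pi.neg_apply] at a b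
  exact le_antisymm a (by simpa using b)

lemma theta_ne_one {d : ℕ} (P : Matrix (Fin (d + 1)) (Fin (d + 1)) ℝ)
    (hnonneg : ∀ i j, 0 ≤ P i j) (hrowsum : ∀ i, ∑ j, P i j = 1)
    (hsuper : ∀ i j : Fin (d + 1), (j : ℕ) = (i : ℕ) + 1 → 0 < P i j)
    (habs : ∀ j, P (Fin.last d) j = if j = Fin.last d then 1 else 0)
    (θ : Fin (d + 1) → ℂ)
    (hcharpoly : (P.map (algebraMap ℝ ℂ)).charpoly
        = (X - 1) * ∏ j : Fin d, (X - C (θ j.castSucc))) (k : Fin d) :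
    1 - θ k.castSucc ≠ 0 := by
  set T : Matrix (Fin d) (Fin d) ℝ := P.submatrix Fin.castSucc Fin.castSucc with hT
  have hexp : (P.map (algebraMap ℝ ℂ)).charpoly
      = (X - 1) * (T.map (algebraMap ℝ ℂ)).charpoly := by
    have hblock : (P.map (algebraMap ℝ ℂ)).charmatrix.submatrix Fin.castSucc Fin.castSucc
        = (T.map (algebraMap ℝ ℂ)).charmatrix := by
      ext1 i j
      simp [Matrix.charmatrix_apply, hT, Matrix.diagonal_apply]
    rw [Matrix.charpoly, Matrix.det_succ_row _ (Fin.last d), Fin.sum_univ_castSucc,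
      Finset.sum_eq_zero]
    · rw [Fin.succAbove_last, hblock, Matrix.charpoly]
      simp [habs]
    · intro j _
      have : Fin.last d ≠ j.castSucc := (Fin.castSucc_lt_last j).ne'
      simp [habs, this, this.symm]
  have hX : (X - 1 : ℂ[X]) ≠ 0 := by
    simpa using Polynomial.X_sub_C_ne_zero (1 : ℂ)
  have hprod := mul_left_cancel₀ hX (hexp.symm.trans hcharpoly)
  have heval := congrArg (Polynomial.eval 1) hprod
  rw [Matrix.eval_charpoly, Polynomial.eval_prod] at heval
  have hdet : (Matrix.scalar (Fin d) (1 : ℂ) - T.map (algebraMap ℝ ℂ)).det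
      = algebraMap ℝ ℂ (1 - T).det := by
    rw [RingHom.map_det]
    rw [map_sub, map_one, map_one, RingHom.mapMatrix_apply]
  have hne : (Matrix.scalar (Fin d) (1 : ℂ) - T.map (algebraMap ℝ ℂ)).det ≠ 0 := by
    rw [hdet]
    exact (_root_.map_ne_zero _).2 (det_block_ne_zero P hnonneg hrowsum hsuper)
  rw [heval, Finset.prod_ne_zero_iff] at hne
  simpa using hne k (Finset.mem_univ _)

section Recursion

variable {d : ℕ} (A : Matrix (Fin (d + 1)) (Fin (d + 1)) ℂ) (θ : Fin (d + 1) → ℂ)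
  (Q : Fin (d + 1) → Matrix (Fin (d + 1)) (Fin (d + 1)) ℂ)

lemma row_succ
    (hQsucc : ∀ k : Fin d, Q k.succ = Q k.castSucc *
        ((1 - θ k.castSucc)⁻¹ • (A - θ k.castSucc • 1))) (k : Fin d) (j : Fin (d + 1)) :
    Q k.succ 0 j = (1 - θ k.castSucc)⁻¹ *
      (∑ l, Q k.castSucc 0 l * A l j - θ k.castSucc * Q k.castSucc 0 j) := by
  rw [hQsucc, Matrix.mul_smul, Matrix.mul_sub, Matrix.mul_smul, Matrix.mul_one]
  simp [Matrix.mul_apply]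

lemma row_triangular (hA : ∀ i j : Fin (d + 1), (i : ℕ) + 1 < (j : ℕ) → A i j = 0)
    (hQ0 : Q 0 = 1)
    (hQsucc : ∀ k : Fin d, Q k.succ = Q k.castSucc *
        ((1 - θ k.castSucc)⁻¹ • (A - θ k.castSucc • 1))) (k : Fin (d + 1)) :
    ∀ j, k < j → Q k 0 j = 0 := by
  induction k using Fin.induction with
  | zero =>
    intro j hj
    rw [hQ0, Matrix.one_apply_ne hj.ne]
  | succ k ih =>
    intro j hj
    rw [row_succ A θ Q hQsucc, ih j (k.castSucc_lt_succ.trans hj), Finset.sum_eq_zero]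
    · simp
    · intro l _
      by_cases hl : k.castSucc < l
      · rw [ih l hl, zero_mul]
      · rw [hA l j, mul_zero]
        simp only [Fin.lt_def, Fin.val_succ, Fin.val_castSucc] at hl hj
        omega

lemma row_diag (hA : ∀ i j : Fin (d + 1), (i : ℕ) + 1 < (j : ℕ) → A i j = 0)
    (hQ0 : Q 0 = 1)
    (hQsucc : ∀ k : Fin d, Q k.succ = Q k.castSucc *
        ((1 - θ k.castSucc)⁻¹ • (A - θ k.castSucc • 1))) (k : Fin (d + 1)) :
    Q k 0 k = (∏ r : Fin (k : ℕ), A (Fin.castLE k.isLt.le r) (Fin.castLE k.isLt r.succ))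
      / ∏ r : Fin (k : ℕ), (1 - θ (Fin.castLE k.isLt.le r)) := by
  induction k using Fin.induction with
  | zero =>
    rw [hQ0, Matrix.one_apply_eq]
    exact (div_one 1).symm
  | succ k ih =>
    have htri := row_triangular A θ Q hA hQ0 hQsucc k.castSucc
    have hsum : ∑ l, Q k.castSucc 0 l * A l k.succ
        = Q k.castSucc 0 k.castSucc * A k.castSucc k.succ := by
      apply Finset.sum_eq_single
      · intro l _ hl
        rcases lt_or_gt_of_ne hl with h | h
        · rw [hA l, mul_zero]
          simp only [Fin.lt_def, Fin.val_succ, Fin.val_castSucc] at h ⊢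
          omega
        · rw [htri l h, zero_mul]
      · simp
    rw [row_succ A θ Q hQsucc, hsum, htri _ k.castSucc_lt_succ, ih, mul_zero, sub_zero]
    have e1 := Fin.prod_univ_castSucc (n := (k : ℕ)) (fun r : Fin ((k : ℕ) + 1) =>
      A (Fin.castLE k.succ.isLt.le r) (Fin.castLE k.succ.isLt r.succ))
    have e2 := Fin.prod_univ_castSucc (n := (k : ℕ)) (fun r : Fin ((k : ℕ) + 1) =>
      1 - θ (Fin.castLE k.succ.isLt.le r))
    refine Eq.trans ?_ (congrArg₂ (· / ·) e1 e2).symm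
    have harith : ∀ a b x t : ℂ, t⁻¹ * (a / b * x) = a * x / (b * t) := by
      intro a b x t
      rw [inv_mul_eq_div, div_mul_eq_mul_div, div_div]
    exact harith _ _ _ _

lemma Q_eq_aeval (hQ0 : Q 0 = 1)
    (hQsucc : ∀ k : Fin d, Q k.succ = Q k.castSucc *
        ((1 - θ k.castSucc)⁻¹ • (A - θ k.castSucc • 1))) (k : Fin (d + 1)) :
    ∃ c : ℂ, Q k = c • aeval A (∏ r : Fin (k : ℕ), (X - C (θ (Fin.castLE k.isLt.le r)))) := by
  induction k using Fin.induction with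
  | zero =>
    refine ⟨1, ?_⟩
    rw [one_smul, hQ0]
    exact (map_one (aeval A)).symm
  | succ k ih =>
    obtain ⟨c, hc⟩ := ih
    refine ⟨c * (1 - θ k.castSucc)⁻¹, ?_⟩
    have e := Fin.prod_univ_castSucc (n := (k : ℕ)) (fun r : Fin ((k : ℕ) + 1) =>
      (X - C (θ (Fin.castLE k.succ.isLt.le r)) : ℂ[X]))
    refine Eq.trans ?_ (congrArg (fun q => (c * (1 - θ k.castSucc)⁻¹) • aeval A q) e).symm
    have hlin : aeval A (X - C (θ k.castSucc)) = A - θ k.castSucc • 1 := by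
      rw [map_sub, aeval_X, aeval_C, Algebra.algebraMap_eq_smul_one]
    rw [hQsucc, hc, ← hlin, smul_mul_smul_comm, ← map_mul]
    rfl

/-- `Q_d (A - 1)` is a multiple of the characteristic polynomial evaluated at `A`, hence zero. -/
lemma Q_last_mul (hQ0 : Q 0 = 1)
    (hQsucc : ∀ k : Fin d, Q k.succ = Q k.castSucc *
        ((1 - θ k.castSucc)⁻¹ • (A - θ k.castSucc • 1)))
    (hcharpoly : A.charpoly = (X - 1) * ∏ j : Fin d, (X - C (θ j.castSucc))) :
    Q (Fin.last d) * A = Q (Fin.last d) := by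
  obtain ⟨c, hc⟩ := Q_eq_aeval A θ Q hQ0 hQsucc (Fin.last d)
  have hc' : Q (Fin.last d) = c • aeval A (∏ j : Fin d, (X - C (θ j.castSucc))) := hc
  have hCH := Matrix.aeval_self_charpoly A
  rw [hcharpoly, mul_comm, map_mul, map_sub, aeval_X, map_one] at hCH
  have h : Q (Fin.last d) * (A - 1) = 0 := by
    rw [hc', Matrix.smul_mul, hCH, smul_zero]
  rwa [Matrix.mul_sub, Matrix.mul_one, sub_eq_zero] at h

end Recursion

/-- The diagonal entries of `Λ` are
`Λ(k,k) = (P(0,1)⋯P(k-1,k)) / ((1-θ_0)⋯(1-θ_{k-1})) ≠ 0`; in particular the lower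
triangular matrix `Λ` is invertible, and hence `P` and `P̂` are similar. -/
theorem stmt2 (d : ℕ) (hd : 1 ≤ d)
    (P : Matrix (Fin (d + 1)) (Fin (d + 1)) ℝ)
    (hnonneg : ∀ i j, 0 ≤ P i j)
    (hrowsum : ∀ i, ∑ j, P i j = 1)
    (hskipfree : ∀ i j : Fin (d + 1), (i : ℕ) + 1 < (j : ℕ) → P i j = 0)
    (hsuper : ∀ i j : Fin (d + 1), (j : ℕ) = (i : ℕ) + 1 → 0 < P i j)
    (habs : ∀ j, P (Fin.last d) j = if j = Fin.last d then 1 else 0)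
    (θ : Fin (d + 1) → ℂ)
    (hθlast : θ (Fin.last d) = 1)
    (hcharpoly : (P.map (algebraMap ℝ ℂ)).charpoly
        = (X - 1) * ∏ j : Fin d, (X - C (θ j.castSucc)))
    (Phat : Matrix (Fin (d + 1)) (Fin (d + 1)) ℂ)
    (hPhat : ∀ i j, Phat i j =
        if j = i then θ i else if (j : ℕ) = (i : ℕ) + 1 then 1 - θ i else 0)
    (Q : Fin (d + 1) → Matrix (Fin (d + 1)) (Fin (d + 1)) ℂ)
    (hQ0 : Q 0 = 1)
    (hQsucc : ∀ k : Fin d, Q k.succ = Q k.castSucc *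
        ((1 - θ k.castSucc)⁻¹ • (P.map (algebraMap ℝ ℂ) - θ k.castSucc • 1)))
    (Λ : Matrix (Fin (d + 1)) (Fin (d + 1)) ℂ)
    (hΛ : ∀ i j, Λ i j = Q i 0 j) :
    (∀ k : Fin (d + 1),
        Λ k k = (∏ r : Fin (k : ℕ),
            (P.map (algebraMap ℝ ℂ)) (Fin.castLE k.isLt.le r) (Fin.castLE k.isLt r.succ))
          / (∏ r : Fin (k : ℕ), (1 - θ (Fin.castLE k.isLt.le r)))
        ∧ Λ k k ≠ 0)
    ∧ IsUnit Λ.det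
    ∧ ∃ S : Matrix (Fin (d + 1)) (Fin (d + 1)) ℂ,
        IsUnit S.det ∧ Phat = S * P.map (algebraMap ℝ ℂ) * S⁻¹ := by
  set A := P.map (algebraMap ℝ ℂ) with hAdef
  have hA : ∀ i j : Fin (d + 1), (i : ℕ) + 1 < (j : ℕ) → A i j = 0 := by
    intro i j h
    simp [hAdef, hskipfree i j h]
  have hθ := theta_ne_one P hnonneg hrowsum hsuper habs θ hcharpoly
  have hdiag : ∀ k : Fin (d + 1),
      Λ k k = (∏ r : Fin (k : ℕ), A (Fin.castLE k.isLt.le r) (Fin.castLE k.isLt r.succ))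
          / (∏ r : Fin (k : ℕ), (1 - θ (Fin.castLE k.isLt.le r))) := fun k =>
    (hΛ k k).trans (row_diag A θ Q hA hQ0 hQsucc k)
  have hdiag0 : ∀ k, Λ k k ≠ 0 := by
    intro k
    rw [hdiag]
    refine div_ne_zero (Finset.prod_ne_zero_iff.2 fun r _ => ?_)
      (Finset.prod_ne_zero_iff.2 fun r _ => ?_)
    · have := hsuper (Fin.castLE k.isLt.le r) (Fin.castLE k.isLt r.succ) (by simp)
      simpa [hAdef] using this.ne'
    · exact hθ ⟨r, by omega⟩
  have hdet : IsUnit Λ.det := by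
    have htri : Λ.IsLowerTriangular := fun i j hij => by
      rw [hΛ]
      exact row_triangular A θ Q hA hQ0 hQsucc i j hij
    rw [Matrix.det_of_isLowerTriangular Λ htri, isUnit_iff_ne_zero]
    exact Finset.prod_ne_zero_iff.2 fun k _ => hdiag0 k
  have hintertwine : Phat * Λ = Λ * A := by
    ext i j
    have hrow : (Λ * A) i j = ∑ l, Q i 0 l * A l j := by
      simp only [Matrix.mul_apply, hΛ]
    rw [hrow, Matrix.mul_apply]
    induction i using Fin.lastCases with
    | last =>
      have hlast : ∑ l, Q (Fin.last d) 0 l * A l j = Q (Fin.last d) 0 j := by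
        rw [← Matrix.mul_apply, Q_last_mul A θ Q hQ0 hQsucc hcharpoly]
      rw [hlast, Finset.sum_eq_single (Fin.last d)]
      · simp [hPhat, hθlast, hΛ]
      · intro l _ hl
        have : (l : ℕ) ≠ d + 1 := by omega
        simp [hPhat, hl, this]
      · simp
    | cast k =>
      rw [Fintype.sum_eq_add k.castSucc k.succ k.castSucc_lt_succ.ne]
      · have hne : k.succ ≠ k.castSucc := k.castSucc_lt_succ.ne'
        rw [hPhat, hPhat, if_pos rfl, if_neg hne, if_pos (by simp), hΛ, hΛ,
          row_succ A θ Q hQsucc, mul_inv_cancel_left₀ (hθ k)]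
        ring
      · rintro l ⟨h1, h2⟩
        have : (l : ℕ) ≠ k + 1 := fun h => h2 (Fin.ext (by simpa using h))
        simp [hPhat, h1, this]
  refine ⟨fun k => ⟨hdiag k, hdiag0 k⟩, hdet, Λ, hdet, ?_⟩
  rw [← hintertwine, Matrix.mul_nonsing_inv_cancel_right _ _ hdet]
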